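/- Let T₀ be a trace class operator on ℓ²(ℕ) whose (1,1) matrix entry vanishes (⟨T₀e_1, e_1⟩ = 0), let β ∈ ℂ, and define the linear functional ω on S₀ by ω(λI + K) = βλ + Σ_{(i,j)≠(1,1)} t_{i,j} k_{i,j} for λ ∈ ℂ and K ∈ K₀ (where t_{i,j} = ⟨T₀e_j, e_i⟩ and k_{i,j} = ⟨Ke_j, e_i⟩). Then ω is a positive functional on S₀ (nonnegative on positive elements of S₀) if and only if there exists α ≥ 0 such that T₀ + αE_{1,1} is a positive operator and β ≥ tr(T₀) + α. -/

import Mathlib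

noncomputable section

open scoped ComplexOrder InnerProductSpace

/-- The Hilbert space ℓ²(ℕ) of square-summable complex sequences. -/
abbrev Hs : Type := lp (fun _ : ℕ => ℂ) 2

/-- The standard orthonormal basis vectors of ℓ²(ℕ) (indexed from 0). -/
def e (i : ℕ) : Hs := lp.single 2 i 1

/-- The matrix unit `E i j : x ↦ ⟨x, e j⟩ e i`. -/
def E (i j : ℕ) : Hs →L[ℂ] Hs := (innerSL ℂ (e j)).smulRight (e i)

/-- `K₀`: the norm-closed linear span of the matrix units `E i j`, `(i,j) ≠ (0,0)`. -/
def K0 : Submodule ℂ (Hs →L[ℂ] Hs) :=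
  (Submodule.span ℂ {T | ∃ i j : ℕ, (i, j) ≠ (0, 0) ∧ T = E i j}).topologicalClosure

/-- The operator system `S₀` spanned by `K₀` and the identity operator. -/
def S0 : Submodule ℂ (Hs →L[ℂ] Hs) := Submodule.span ℂ {(1 : Hs →L[ℂ] Hs)} ⊔ K0

lemma one_mem_S0 : (1 : Hs →L[ℂ] Hs) ∈ S0 :=
  Submodule.mem_sup_left (Submodule.mem_span_singleton_self _)

/-- The matrix entry `X_{ij} = ⟨X e_j, e_i⟩` of a bounded operator on ℓ²(ℕ). -/
def entry (X : Hs →L[ℂ] Hs) (i j : ℕ) : ℂ := ⟪e i, X (e j)⟫_ℂ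

/-- `φ_{n+1}(X) = V_{n+1}* X V_{n+1}`, the upper-left (n+1)×(n+1) corner of `X`. -/
def phi (n : ℕ) (X : Hs →L[ℂ] Hs) : Matrix (Fin (n+1)) (Fin (n+1)) ℂ :=
  fun i j => entry X i j

/-- `Q_{n+1}`: the projection onto the orthocomplement of the span of `e 0, …, e n`. -/
def Qop (n : ℕ) : Hs →L[ℂ] Hs := 1 - ∑ i : Fin (n+1), E i i

/-- `ψ_{n+1}(Y) = V_{n+1} Y V_{n+1}* + y₀₀ Q_{n+1}`. -/
def psi (n : ℕ) (Y : Matrix (Fin (n+1)) (Fin (n+1)) ℂ) : Hs →L[ℂ] Hs :=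
  (∑ i : Fin (n+1), ∑ j : Fin (n+1), Y i j • E i j) + Y 0 0 • Qop n

/-- Positivity in the C*-algebra of m×m matrices over a star ring: `M = N* N`. -/
def MatPos {A : Type*} [Ring A] [StarRing A] {m : ℕ}
    (M : Matrix (Fin m) (Fin m) A) : Prop :=
  ∃ N : Matrix (Fin m) (Fin m) A, M = N.conjTranspose * N

/-- Complete positivity of a map between star rings: every matrix amplification
preserves positivity. -/
def IsCPfun {A B : Type*} [Ring A] [StarRing A] [Ring B] [StarRing B]
    (θ : A → B) : Prop :=
  ∀ (m : ℕ) (M : Matrix (Fin m) (Fin m) A), MatPos M → MatPos (M.map θ)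
set_option synthInstance.maxHeartbeats 1000000

/-- The absolute value `|T| = √(T*T)` of a bounded operator on ℓ²(ℕ). -/
def absOp (T : Hs →L[ℂ] Hs) : Hs →L[ℂ] Hs :=
  haveI : NonUnitalContinuousFunctionalCalculus ℝ (Hs →L[ℂ] Hs) IsSelfAdjoint :=
    IsSelfAdjoint.instNonUnitalContinuousFunctionalCalculus
  CFC.sqrt (star T * T)

/-- `T` is trace class: `T` is compact and `Σᵢ ⟨|T|eᵢ, eᵢ⟩ < ∞`. -/
def TraceClass (T : Hs →L[ℂ] Hs) : Prop :=
  IsCompactOperator ⇑T ∧ Summable (fun i : ℕ => (⟪e i, absOp T (e i)⟫_ℂ).re)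

/-- The trace `tr(T) = Σᵢ ⟨T eᵢ, eᵢ⟩` of a (trace class) operator. -/
def traceOp (T : Hs →L[ℂ] Hs) : ℂ := ∑' i : ℕ, entry T i i

lemma inner_e (i : ℕ) (x : Hs) : ⟪e i, x⟫_ℂ = x i := by
  unfold e
  rw [lp.inner_single_left]
  simp

lemma e_apply (i j : ℕ) : (e i : Hs) j = if j = i then 1 else 0 := by
  unfold e
  rw [lp.single_apply]
  split_ifs with h
  · subst h; simp
  · simp [h]

lemma E_apply (i j : ℕ) (x : Hs) : E i j x = x j • e i := by
  simp [E, inner_e]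

lemma entry_E (a b i j : ℕ) : entry (E a b) i j = if i = a ∧ j = b then 1 else 0 := by
  unfold entry
  rw [E_apply, inner_smul_right, inner_e, e_apply, e_apply]
  by_cases h1 : i = a <;> by_cases h2 : j = b <;> simp [h1, h2, eq_comm]
  intro h
  exact (h2 h.symm).elim

lemma entry_add (X Y : Hs →L[ℂ] Hs) (i j : ℕ) : entry (X + Y) i j = entry X i j + entry Y i j := by
  simp [entry]

lemma entry_smul (c : ℂ) (X : Hs →L[ℂ] Hs) (i j : ℕ) : entry (c • X) i j = c * entry X i j := by
  simp [entry]

lemma entry_one (i j : ℕ) : entry (1 : Hs →L[ℂ] Hs) i j = if i = j then 1 else 0 := by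
  unfold entry
  rw [one_apply_eq_self, inner_e, e_apply]

lemma entry_sum {ι : Type} (s : Finset ι) (X : ι → Hs →L[ℂ] Hs) (i j : ℕ) :
    entry (∑ k ∈ s, X k) i j = ∑ k ∈ s, entry (X k) i j := by
  unfold entry
  rw [sum_apply, inner_sum]

lemma K0_entry {K : Hs →L[ℂ] Hs} (hK : K ∈ K0) : entry K 0 0 = 0 := by
  have hc : IsClosed {X : Hs →L[ℂ] Hs | entry X 0 0 = 0} := by
    apply isClosed_eq _ continuous_const
    unfold entry
    fun_prop
  have hs : ((Submodule.span ℂ {T | ∃ i j : ℕ, (i, j) ≠ (0, 0) ∧ T = E i j} :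
      Submodule ℂ (Hs →L[ℂ] Hs)) : Set (Hs →L[ℂ] Hs)) ⊆ {X | entry X 0 0 = 0} := by
    intro X hX
    induction hX using Submodule.span_induction with
    | mem x h =>
      obtain ⟨i, j, hij, rfl⟩ := h
      simp only [Set.mem_ofPred_eq, entry_E]
      rw [if_neg]
      rintro ⟨rfl, rfl⟩
      exact hij rfl
    | zero => simp [entry]
    | add x y _ _ hx hy =>
      simp only [Set.mem_ofPred_eq] at *
      rw [entry_add, hx, hy, add_zero]
    | smul a x _ hx =>
      simp only [Set.mem_ofPred_eq] at *
      rw [entry_smul, hx, mul_zero]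
  exact closure_minimal hs hc hK

lemma E_mem_K0 {i j : ℕ} (h : (i, j) ≠ (0, 0)) : E i j ∈ K0 :=
  Submodule.le_topologicalClosure _ (Submodule.subset_span ⟨i, j, h, rfl⟩)

lemma isPositive_of_inner {T : Hs →L[ℂ] Hs} (h : ∀ x, 0 ≤ ⟪x, T x⟫_ℂ) : T.IsPositive := by
  rw [ContinuousLinearMap.isPositive_iff_complex]
  intro x
  have h1 := h x
  rw [← inner_conj_symm] at h1
  have h2 := Complex.nonneg_iff.mp h1
  simp only [Complex.conj_re, Complex.conj_im] at h2
  refine ⟨?_, h2.1⟩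
  apply Complex.ext
  · simp
  · simp only [RCLike.re_to_complex, Complex.ofReal_im]
    linarith [h2.2]

/-- finite truncation vector -/
def vec (n : ℕ) (y : ℕ → ℂ) : Hs := ∑ i ∈ Finset.range n, y i • e i

lemma inner_vec (n : ℕ) (y : ℕ → ℂ) (T : Hs →L[ℂ] Hs) :
    ⟪vec n y, T (vec n y)⟫_ℂ =
      ∑ i ∈ Finset.range n, ∑ j ∈ Finset.range n, (starRingEnd ℂ) (y i) * y j * entry T i j := by
  unfold vec entry
  simp only [map_sum, map_smul, sum_inner, inner_sum, inner_smul_left, inner_smul_right,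
    Finset.mul_sum]
  rw [Finset.sum_comm]
  refine Finset.sum_congr rfl fun i _ => Finset.sum_congr rfl fun j _ => by ring

lemma vec_tendsto (x : Hs) :
    Filter.Tendsto (fun n => vec n (fun i => x i)) Filter.atTop (nhds x) := by
  have h := (lp.hasSum_single (p := 2) (by simp) x).tendsto_sum_nat
  refine h.congr fun n => ?_
  unfold vec e
  refine Finset.sum_congr rfl fun i _ => ?_
  rw [← lp.single_smul]
  simp

lemma psd_entry {T : Hs →L[ℂ] Hs} (hT : T.IsPositive) (n : ℕ) :
    (Matrix.of fun i j : Fin n => entry T i j).PosSemidef := by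
  refine .of_dotProduct_mulVec_nonneg ?_ fun x => ?_
  · ext i j
    simp only [Matrix.conjTranspose_apply, Matrix.of_apply, entry]
    rw [RCLike.star_def, inner_conj_symm]
    exact hT.isSymmetric _ _
  · have h := hT.inner_nonneg_right (vec n (fun i => if h : i < n then x ⟨i, h⟩ else 0))
    rw [inner_vec] at h
    simp only [Finset.sum_range] at h
    convert h using 1
    simp only [dotProduct, Matrix.mulVec, Finset.mul_sum]
    refine Finset.sum_congr rfl fun i _ => Finset.sum_congr rfl fun j _ => ?_
    simp
    ring

lemma sum_mul_nonneg {T X : Hs →L[ℂ] Hs} (hT : T.IsPositive) (hX : X.IsPositive) (n : ℕ) :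
    0 ≤ ∑ i ∈ Finset.range n, ∑ j ∈ Finset.range n, entry T i j * entry X i j := by
  have h := ((psd_entry hT n).hadamard (psd_entry hX n)).dotProduct_mulVec_nonneg (fun _ => 1)
  simp only [Finset.sum_range]
  simpa [dotProduct, Matrix.mulVec, Matrix.hadamard] using h

lemma entry_le_abs {T : Hs →L[ℂ] Hs} (hT : IsSelfAdjoint T) (i : ℕ) :
    (entry T i i).re ≤ (⟪e i, absOp T (e i)⟫_ℂ).re := by
  haveI : NonUnitalContinuousFunctionalCalculus ℝ (Hs →L[ℂ] Hs) IsSelfAdjoint :=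
    IsSelfAdjoint.instNonUnitalContinuousFunctionalCalculus
  have h1 : absOp T = CFC.abs T := rfl
  have h2 : (0 : Hs →L[ℂ] Hs) ≤ CFC.abs T - T := by
    rw [CFC.abs_sub_self T hT]
    exact nsmul_nonneg (CFC.negPart_nonneg T) 2
  rw [ContinuousLinearMap.nonneg_iff_isPositive] at h2
  have h3 := h2.re_inner_nonneg_right (e i)
  rw [sub_apply, inner_sub_right] at h3
  rw [h1]
  simp only [map_sub, RCLike.re_to_complex] at h3
  unfold entry
  linarith

lemma entry_self_nonneg {T : Hs →L[ℂ] Hs} (hT : T.IsPositive) (i : ℕ) : 0 ≤ entry T i i :=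
  hT.inner_nonneg_right (e i)

lemma orth_e : Orthonormal ℂ e := by
  rw [orthonormal_iff_ite]
  intro i j
  rw [inner_e, e_apply]

lemma testK_inner (n : ℕ) (y : ℕ → ℂ) (lam : ℂ) (x : Hs) :
    ⟪x, (lam • (1 : Hs →L[ℂ] Hs) + ∑ i ∈ Finset.range n, ∑ j ∈ Finset.range n,
      ((starRingEnd ℂ) (y i) * y j - if i = j then lam else 0) • E i j) x⟫_ℂ =
    (starRingEnd ℂ) (∑ i ∈ Finset.range n, y i * x i) * (∑ i ∈ Finset.range n, y i * x i) +
    lam * (⟪x, x⟫_ℂ - ∑ i ∈ Finset.range n, (starRingEnd ℂ) (x i) * x i) := by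
  have hx : ∀ i, ⟪x, e i⟫_ℂ = (starRingEnd ℂ) (x i) := by
    intro i
    rw [← inner_conj_symm, inner_e]
  have h1 : ∀ i j, ⟪x, (((starRingEnd ℂ) (y i) * y j - if i = j then lam else 0) • E i j) x⟫_ℂ =
      ((starRingEnd ℂ) (y i * x i)) * (y j * x j) -
        if i = j then lam * ((starRingEnd ℂ) (x i) * x i) else 0 := by
    intro i j
    rw [smul_apply, inner_smul_right, E_apply, inner_smul_right, hx, map_mul]
    split_ifs with h
    · subst h; ring
    · ring
  rw [add_apply, inner_add_right, smul_apply,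
    inner_smul_right, one_apply_eq_self, sum_apply, inner_sum]
  have h2 : ∀ i ∈ Finset.range n, ⟪x, (∑ j ∈ Finset.range n,
      ((starRingEnd ℂ) (y i) * y j - if i = j then lam else 0) • E i j) x⟫_ℂ =
      (starRingEnd ℂ) (y i * x i) * (∑ j ∈ Finset.range n, y j * x j) -
        lam * ((starRingEnd ℂ) (x i) * x i) := by
    intro i hi
    rw [sum_apply, inner_sum, Finset.sum_congr rfl fun j _ => h1 i j,
      Finset.sum_sub_distrib, ← Finset.mul_sum, Finset.sum_ite_eq, if_pos hi]
  rw [Finset.sum_congr rfl h2, Finset.sum_sub_distrib, ← Finset.sum_mul, ← Finset.mul_sum, map_sum]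
  ring

lemma testK_pos (n : ℕ) (y : ℕ → ℂ) (lam : ℂ) (hl : 0 ≤ lam) :
    (lam • (1 : Hs →L[ℂ] Hs) + ∑ i ∈ Finset.range n, ∑ j ∈ Finset.range n,
      ((starRingEnd ℂ) (y i) * y j - if i = j then lam else 0) • E i j).IsPositive := by
  apply isPositive_of_inner
  intro x
  rw [testK_inner]
  apply add_nonneg
  · exact star_mul_self_nonneg _
  · apply mul_nonneg hl
    rw [sub_nonneg]
    have h := orth_e.sum_inner_products_le x (s := Finset.range n)
    have h3 : ∑ i ∈ Finset.range n, (starRingEnd ℂ) (x i) * x i =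
        ((∑ i ∈ Finset.range n, ‖⟪e i, x⟫_ℂ‖ ^ 2 : ℝ) : ℂ) := by
      push_cast
      refine Finset.sum_congr rfl fun i _ => ?_
      rw [inner_e, Complex.conj_mul']
    rw [h3, inner_self_eq_norm_sq_to_K]
    change ((_ : ℝ) : ℂ) ≤ ((‖x‖ : ℝ) : ℂ) ^ 2
    rw [← Complex.ofReal_pow, Complex.real_le_real]
    exact h

lemma testK_entry (n : ℕ) (c : ℕ → ℕ → ℂ) (i j : ℕ) :
    entry (∑ i ∈ Finset.range n, ∑ j ∈ Finset.range n, c i j • E i j) i j =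
      if i ∈ Finset.range n ∧ j ∈ Finset.range n then c i j else 0 := by
  simp only [entry_sum, entry_smul, entry_E, mul_ite, mul_one, mul_zero]
  simp only [ite_and, Finset.sum_ite_eq]
  by_cases h1 : i ∈ Finset.range n <;> by_cases h2 : j ∈ Finset.range n <;>
    simp only [h1, h2, if_true, if_false]
  all_goals
    rw [Finset.sum_congr rfl (fun a _ => show _ = if i = a then (if j ∈ Finset.range n then c a j else 0) else 0 by
      split_ifs <;> simp_all)]
    simp_all

lemma key {T₀ : Hs →L[ℂ] Hs} (h00 : entry T₀ 0 0 = 0) {β : ℂ}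
    (H : ∀ (lam : ℂ) (K : Hs →L[ℂ] Hs), K ∈ K0 →
        (lam • (1 : Hs →L[ℂ] Hs) + K).IsPositive →
        0 ≤ β * lam + ∑' p : ℕ × ℕ,
          (if p = (0, 0) then 0 else entry T₀ p.1 p.2 * entry K p.1 p.2)) (n : ℕ) (y : ℕ → ℂ) :
    0 ≤ (β - ∑ i ∈ Finset.range n, entry T₀ i i) * ((starRingEnd ℂ) (y 0) * y 0) +
      ⟪vec n y, T₀ (vec n y)⟫_ℂ := by
  set lam : ℂ := (starRingEnd ℂ) (y 0) * y 0 with hlam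
  have hl : 0 ≤ lam := star_mul_self_nonneg _
  have h := H lam _ ?_ (testK_pos n y lam hl)
  · convert h using 1
    simp only [testK_entry n (fun i j => (starRingEnd ℂ) (y i) * y j - if i = j then lam else 0)]
    rw [tsum_eq_sum (s := Finset.range n ×ˢ Finset.range n), Finset.sum_product, inner_vec, sub_mul]
    · have h2 : ∀ i ∈ Finset.range n, ∀ j ∈ Finset.range n,
          (if (i, j) = (0, 0) then 0 else entry T₀ i j *
            (if i ∈ Finset.range n ∧ j ∈ Finset.range n then
              ((starRingEnd ℂ) (y i) * y j - if i = j then lam else 0) else 0)) =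
          (starRingEnd ℂ) (y i) * y j * entry T₀ i j -
            if i = j then lam * entry T₀ i i else 0 := by
        intro i hi j hj
        rw [if_pos (And.intro hi hj)]
        by_cases h0 : (i, j) = (0, 0)
        · rw [if_pos h0]
          obtain ⟨rfl, rfl⟩ := Prod.mk.inj h0
          simp [h00]
        · rw [if_neg h0]
          split_ifs with hij
          · subst hij; ring
          · ring
      rw [Finset.sum_congr rfl fun i hi => Finset.sum_congr rfl fun j hj => h2 i hi j hj]
      simp only [Finset.sum_sub_distrib, Finset.sum_ite_eq]
      rw [Finset.sum_congr rfl (fun i hi => if_pos hi), ← Finset.mul_sum]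
      ring
    · intro p hp
      rw [Finset.mem_product] at hp
      rw [if_neg hp]
      simp
  · refine Submodule.sum_mem _ fun i _ => Submodule.sum_mem _ fun j _ => ?_
    by_cases h0 : (i, j) = (0, 0)
    · obtain ⟨rfl, rfl⟩ := Prod.mk.inj h0
      simp [hlam]
    · exact Submodule.smul_mem _ _ (E_mem_K0 h0)

/-- let `T₀` be trace class with vanishing (0,0) entry and `β ∈ ℂ`. The
functional `ω(λI + K) = βλ + Σ_{(i,j)≠(0,0)} t_{ij} k_{ij}` on `S₀` is positive
(nonnegative on positive elements of `S₀`) iff there is `α ≥ 0` such that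
`T₀ + α E₀₀` is a positive operator and `β ≥ tr(T₀) + α`. -/
theorem stmt_8 (T₀ : Hs →L[ℂ] Hs) (hT : TraceClass T₀) (h00 : entry T₀ 0 0 = 0) (β : ℂ) :
    (∀ (lam : ℂ) (K : Hs →L[ℂ] Hs), K ∈ K0 →
        (lam • (1 : Hs →L[ℂ] Hs) + K).IsPositive →
        0 ≤ β * lam + ∑' p : ℕ × ℕ,
          (if p = (0, 0) then 0 else entry T₀ p.1 p.2 * entry K p.1 p.2)) ↔
      (∃ α : ℝ, 0 ≤ α ∧ (T₀ + (α : ℂ) • E 0 0).IsPositive ∧ traceOp T₀ + (α : ℂ) ≤ β) := by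
  constructor
  · intro H
    have hk := key h00 H
    -- diagonal entries are nonnegative
    have hd : ∀ i, 0 ≤ entry T₀ i i := by
      intro i
      rcases Nat.eq_zero_or_pos i with rfl | hi
      · rw [h00]
      · have h := hk (i + 1) (fun j => if j = i then 1 else 0)
        rw [if_neg hi.ne] at h
        have hv : vec (i + 1) (fun j => if j = i then 1 else 0) = e i := by
          simp [vec]
        rw [hv] at h
        simpa [entry] using h
    have hb : ∀ n, ∑ i ∈ Finset.range n, entry T₀ i i ≤ β := by
      intro n
      have h1 : ∑ i ∈ Finset.range n, entry T₀ i i ≤ ∑ i ∈ Finset.range (n + 1), entry T₀ i i := by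
        rw [Finset.sum_range_succ]
        exact le_add_of_nonneg_right (hd n)
      refine h1.trans ?_
      have h := hk (n + 1) (fun j => if j = 0 then 1 else 0)
      have hv : vec (n + 1) (fun j => if j = 0 then 1 else 0) = e 0 := by
        simp [vec]
      rw [hv] at h
      have h0 : ⟪e 0, T₀ (e 0)⟫_ℂ = 0 := h00
      rw [h0] at h
      simpa using h
    have hre : ∀ i, entry T₀ i i = ((entry T₀ i i).re : ℂ) := by
      intro i
      have := Complex.nonneg_iff.mp (hd i)
      apply Complex.ext
      · simp
      · simpa using this.2.symm
    have hsre : Summable (fun i => (entry T₀ i i).re) := by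
      refine summable_of_sum_range_le (c := β.re) (fun i => (Complex.nonneg_iff.mp (hd i)).1) ?_
      intro n
      have := (Complex.le_def.mp (hb n)).1
      simpa using this
    have hs : Summable (fun i => entry T₀ i i) := by
      have h := Complex.ofRealCLM.summable hsre
      refine h.congr fun i => ?_
      exact (hre i).symm
    have htend := hs.hasSum.tendsto_sum_nat
    have hle : traceOp T₀ ≤ β := le_of_tendsto' htend hb
    have hα := sub_nonneg.mpr hle
    have hα' := Complex.nonneg_iff.mp hα
    have hαe : (((β - traceOp T₀).re : ℝ) : ℂ) = β - traceOp T₀ := by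
      apply Complex.ext
      · simp
      · simpa using hα'.2
    refine ⟨(β - traceOp T₀).re, hα'.1, ?_, ?_⟩
    · rw [hαe]
      apply isPositive_of_inner
      intro x
      have hc : Continuous fun v : Hs => ⟪v, T₀ v⟫_ℂ := by fun_prop
      have h1 := (hc.tendsto x).comp (vec_tendsto x)
      have h2 : Filter.Tendsto (fun n => (β - ∑ i ∈ Finset.range n, entry T₀ i i) *
          ((starRingEnd ℂ) (x 0) * x 0) +
          ⟪vec n (fun i => x i), T₀ (vec n (fun i => x i))⟫_ℂ) Filter.atTop
          (nhds ((β - traceOp T₀) * ((starRingEnd ℂ) (x 0) * x 0) + ⟪x, T₀ x⟫_ℂ)) :=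
        ((tendsto_const_nhds.sub htend).mul_const _).add h1
      have h3 := ge_of_tendsto' h2 (fun n => hk n (fun i => x i))
      convert h3 using 1
      rw [add_apply, inner_add_right, smul_apply,
        inner_smul_right, E_apply, inner_smul_right, ← inner_conj_symm x (e 0), inner_e]
      ring
    · rw [hαe]
      simp
  · rintro ⟨α, hα, hpos, hβ⟩ lam K hK hX
    have hαc : (0 : ℂ) ≤ (α : ℂ) := by exact_mod_cast hα
    set T := T₀ + (α : ℂ) • E 0 0 with hTdef
    have hTent : ∀ i j, entry T i j = entry T₀ i j + if i = 0 ∧ j = 0 then (α : ℂ) else 0 := by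
      intro i j
      rw [hTdef, entry_add, entry_smul, entry_E]
      simp
    have hd : ∀ i, 0 ≤ entry T₀ i i := by
      intro i
      by_cases hi : i = 0
      · rw [hi, h00]
      · have h := entry_self_nonneg hpos i
        rw [hTent] at h
        simpa [hi] using h
    have hE : (E 0 0).IsPositive := by
      apply isPositive_of_inner
      intro x
      rw [E_apply, inner_smul_right, ← inner_conj_symm, inner_e, mul_comm]
      exact star_mul_self_nonneg _
    have hsa : IsSelfAdjoint T₀ := by
      have h1 : T₀ = T - (α : ℂ) • E 0 0 := by rw [hTdef]; simp
      rw [h1]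
      exact hpos.isSelfAdjoint.sub (hE.smul_of_nonneg hαc).isSelfAdjoint
    have hre : ∀ i, entry T₀ i i = ((entry T₀ i i).re : ℂ) := by
      intro i
      have := Complex.nonneg_iff.mp (hd i)
      apply Complex.ext
      · simp
      · simpa using this.2.symm
    have hsre : Summable (fun i => (entry T₀ i i).re) :=
      Summable.of_nonneg_of_le (fun i => (Complex.nonneg_iff.mp (hd i)).1)
        (fun i => entry_le_abs hsa i) hT.2
    have hs : Summable (fun i => entry T₀ i i) := by
      have h := Complex.ofRealCLM.summable hsre
      refine h.congr fun i => ?_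
      exact (hre i).symm
    have hK0 := K0_entry hK
    have hlam : 0 ≤ lam := by
      have h := entry_self_nonneg hX 0
      rw [entry_add, entry_smul, entry_one, hK0] at h
      simpa using h
    have htr : ∀ n, ∑ i ∈ Finset.range n, entry T₀ i i ≤ traceOp T₀ := by
      intro n
      have h1 : Monotone (fun n => ∑ i ∈ Finset.range n, entry T₀ i i) := by
        apply monotone_nat_of_le_succ
        intro n
        rw [Finset.sum_range_succ]
        exact le_add_of_nonneg_right (hd n)
      exact h1.ge_of_tendsto hs.hasSum.tendsto_sum_nat n
    by_cases hsum : Summable (fun p : ℕ × ℕ =>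
        (if p = (0, 0) then 0 else entry T₀ p.1 p.2 * entry K p.1 p.2))
    · have hsq : Filter.Tendsto (fun n : ℕ => Finset.range n ×ˢ Finset.range n)
          Filter.atTop Filter.atTop := by
        apply Filter.tendsto_atTop_finset_of_monotone
        · intro a b hab
          exact Finset.product_subset_product (Finset.range_mono hab) (Finset.range_mono hab)
        · intro p
          refine ⟨max p.1 p.2 + 1, ?_⟩
          simp only [Finset.mem_product, Finset.mem_range]
          omega
      have hlim := (hsum.hasSum.comp hsq).const_add (β * lam)
      refine ge_of_tendsto hlim ?_
      filter_upwards [Filter.eventually_ge_atTop 1] with n hn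
      simp only [Function.comp_apply]
      have h0n : 0 ∈ Finset.range n := Finset.mem_range.mpr hn
      have hXe : ∀ i j, entry K i j = entry (lam • (1 : Hs →L[ℂ] Hs) + K) i j -
          if i = j then lam else 0 := by
        intro i j
        rw [entry_add, entry_smul, entry_one]
        split_ifs <;> simp
      have hterm : ∀ i j : ℕ, (if (i, j) = (0, 0) then 0 else entry T₀ i j * entry K i j) =
          entry T i j * entry (lam • (1 : Hs →L[ℂ] Hs) + K) i j -
            if i = j then lam * entry T i i else 0 := by
        intro i j
        have h1 : (if (i, j) = (0, 0) then 0 else entry T₀ i j * entry K i j) =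
            entry T i j * entry K i j := by
          by_cases h0 : (i, j) = (0, 0)
          · rw [if_pos h0]
            obtain ⟨rfl, rfl⟩ := Prod.mk.inj h0
            rw [hK0, mul_zero]
          · rw [if_neg h0, hTent, if_neg, add_zero]
            rintro ⟨rfl, rfl⟩
            exact h0 rfl
        rw [h1, hXe]
        split_ifs with hij
        · subst hij; ring
        · ring
      rw [Finset.sum_product]
      simp only [hterm, Finset.sum_sub_distrib, Finset.sum_ite_eq]
      rw [Finset.sum_congr rfl (fun i hi => if_pos hi), ← Finset.mul_sum]
      have hTs : ∑ i ∈ Finset.range n, entry T i i =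
          ∑ i ∈ Finset.range n, entry T₀ i i + α := by
        simp only [hTent, and_self, Finset.sum_add_distrib, Finset.sum_ite_eq', if_pos h0n]
      have h1 := sum_mul_nonneg hpos hX n
      have h2 : 0 ≤ lam * (β - ∑ i ∈ Finset.range n, entry T i i) := by
        apply mul_nonneg hlam
        rw [sub_nonneg, hTs]
        refine le_trans ?_ hβ
        have := htr n
        gcongr
      have h3 := add_nonneg h1 h2
      convert h3 using 1
      ring
    · rw [tsum_eq_zero_of_not_summable hsum, add_zero]
      refine mul_nonneg ?_ hlam
      refine le_trans (add_nonneg ?_ hαc) hβ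
      simpa using htr 0
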